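/- arXiv:2509.11069 — 2 statements merged into one kernel-verified Lean document; each statement's English description precedes it below -/
import Mathlib

section
/- Let Ω ⊂ ℝⁿ be compact and let f : ℝ × Ω → ℝ be RAP in t uniformly with respect to x ∈ Ω. For ν > 0 define F(t,x,ν) = ∫_{−∞}^{t} e^{−ν(t−s)} f(s,x) ds. Then for each fixed ν > 0 the function (t,x) ↦ F(t,x,ν) is RAP in t uniformly with respect to x ∈ Ω. -/
open MeasureTheory Filter Metric

def RelativelyDense (S : Set ℝ) : Prop :=
  ∃ l > 0, ∀ a : ℝ, ∃ τ ∈ S, τ ∈ Set.Icc a (a + l)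

def RAPUniform {E F : Type*} [NormedAddCommGroup E] [NormedAddCommGroup F]
    (f : ℝ → E → F) (S : Set E) : Prop :=
  (∃ C, ∀ t, ∀ x ∈ S, ‖f t x‖ ≤ C) ∧
  UniformContinuousOn (fun p : ℝ × E => f p.1 p.2) (Set.univ ×ˢ S) ∧
  ∀ ε > 0, RelativelyDense
    {τ | Filter.limsup (fun t => ⨆ x ∈ S, ‖f (t + τ) x - f t x‖) (Filter.cocompact ℝ) < ε}

/-- `Fexp f x ν t = ∫_{-∞}^t e^{-ν(t-s)} f(s,x) ds`. -/
noncomputable def Fexp {n : ℕ} (f : ℝ → EuclideanSpace ℝ (Fin n) → ℝ)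
    (x : EuclideanSpace ℝ (Fin n)) (ν t : ℝ) : ℝ :=
  ∫ s in Set.Iic t, Real.exp (-ν * (t - s)) * f s x

/-!
`F(·, x, ν)` is the convolution of `f(·, x)` with the integrable kernel `k(u) = e^{-νu} 1_{u ≥ 0}`,
and convolution with any integrable kernel preserves uniform remote almost periodicity.
Since `‖k ⋆ g‖∞ ≤ ‖k‖₁ ‖g‖∞` and translations commute with convolution, boundedness and uniform
continuity carry over. If a bounded `g` is at most `δ` off a compact set `K`, then `(k ⋆ g)(t)` is
at most `‖k‖₁ δ` plus a multiple of the mass of `‖k‖` on `t - K`, and this mass vanishes as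
`|t| → ∞` by dominated convergence. Applied to `g = f(· + τ, x) - f(·, x)`, this shows that remote
translation numbers of `f` are remote translation numbers of the convolution.
-/

open scoped Topology Convolution

theorem RelativelyDense.mono {S T : Set ℝ} (hS : RelativelyDense S) (hST : S ⊆ T) :
    RelativelyDense T := by
  obtain ⟨l, hl, hS⟩ := hS
  refine ⟨l, hl, fun a => ?_⟩
  obtain ⟨τ, hτS, hτ⟩ := hS a
  exact ⟨τ, hST hτS, hτ⟩

section BoundedSupremum

variable {ι α : Type*} {l : Filter ι} {S : Set α} {g : ι → α → ℝ} {C ε : ℝ}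

theorem le_biSup_of_forall_mem_le {g : α → ℝ} (hC : ∀ x ∈ S, g x ≤ C) {x : α} (hx : x ∈ S) :
    g x ≤ ⨆ y ∈ S, g y := by
  have hbdd : BddAbove (Set.range fun y => ⨆ _ : y ∈ S, g y) := by
    refine ⟨max C 0, Set.forall_mem_range.2 fun y => ?_⟩
    exact Real.iSup_le (fun hy => (hC y hy).trans (le_max_left _ _)) (le_max_right _ _)
  simpa only [hx, ciSup_unique] using le_ciSup hbdd x

theorem biSup_le_of_forall_mem_le {g : α → ℝ} (hC₀ : 0 ≤ C) (hC : ∀ x ∈ S, g x ≤ C) :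
    ⨆ x ∈ S, g x ≤ C :=
  Real.iSup_le (fun x => Real.iSup_le (hC x) hC₀) hC₀

theorem eventually_forall_mem_lt_of_limsup_biSup_lt (hC : ∀ i, ∀ x ∈ S, g i x ≤ C)
    (h : limsup (fun i => ⨆ x ∈ S, g i x) l < ε) : ∀ᶠ i in l, ∀ x ∈ S, g i x < ε := by
  have hbdd : IsBoundedUnder (· ≤ ·) l fun i => ⨆ x ∈ S, g i x :=
    isBoundedUnder_of ⟨max C 0, fun i => biSup_le_of_forall_mem_le (le_max_right _ _)
      fun x hx => (hC i x hx).trans (le_max_left _ _)⟩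
  filter_upwards [eventually_lt_of_limsup_lt h hbdd] with i hi x hx
  exact (le_biSup_of_forall_mem_le (hC i) hx).trans_lt hi

theorem limsup_biSup_le_of_eventually_forall_mem_le [l.NeBot] (hg : ∀ i, ∀ x ∈ S, 0 ≤ g i x)
    (hε : 0 ≤ ε) (h : ∀ᶠ i in l, ∀ x ∈ S, g i x ≤ ε) :
    limsup (fun i => ⨆ x ∈ S, g i x) l ≤ ε := by
  have hbdd : IsBoundedUnder (· ≥ ·) l fun i => ⨆ x ∈ S, g i x :=
    isBoundedUnder_of ⟨0, fun i => Real.iSup_nonneg fun x => Real.iSup_nonneg (hg i x)⟩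
  exact limsup_le_of_le hbdd.isCoboundedUnder_le
    (h.mono fun i => biSup_le_of_forall_mem_le hε)

end BoundedSupremum

theorem rapUniform_iff_eventually {E F : Type*} [NormedAddCommGroup E] [NormedAddCommGroup F]
    {f : ℝ → E → F} {S : Set E} :
    RAPUniform f S ↔
      (∃ C, ∀ t, ∀ x ∈ S, ‖f t x‖ ≤ C) ∧
      UniformContinuousOn (fun p : ℝ × E => f p.1 p.2) (Set.univ ×ˢ S) ∧
      ∀ ε > 0, RelativelyDense {τ | ∀ᶠ t in cocompact ℝ, ∀ x ∈ S, ‖f (t + τ) x - f t x‖ < ε} := by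
  refine and_congr_right fun ⟨C, hC⟩ => and_congr_right fun _ =>
    ⟨fun h ε hε => ?_, fun h ε hε => ?_⟩
  · refine (h ε hε).mono fun τ hτ => eventually_forall_mem_lt_of_limsup_biSup_lt (C := C + C) ?_ hτ
    exact fun t x hx => norm_sub_le_of_le (hC _ x hx) (hC _ x hx)
  · refine (h (ε / 2) (half_pos hε)).mono fun τ hτ => lt_of_le_of_lt ?_ (half_lt_self hε)
    exact limsup_biSup_le_of_eventually_forall_mem_le (fun _ _ _ => norm_nonneg _)
      (half_pos hε).le (hτ.mono fun t ht x hx => (ht x hx).le)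

instance isCountablyGenerated_cocompact {X : Type*} [TopologicalSpace X]
    [WeaklyLocallyCompactSpace X] [SigmaCompactSpace X] : (cocompact X).IsCountablyGenerated := by
  let K := CompactExhaustion.choice X
  have hbasis : (cocompact X).HasBasis (fun _ : ℕ => True) fun n => (K n)ᶜ := by
    refine hasBasis_cocompact.to_hasBasis (fun s hs => ?_) fun n _ =>
      ⟨K n, K.isCompact n, subset_rfl⟩
    obtain ⟨n, hn⟩ := K.exists_superset_of_isCompact hs
    exact ⟨n, trivial, Set.compl_subset_compl.2 hn⟩
  exact hbasis.isCountablyGenerated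

theorem tendsto_setIntegral_preimage_const_sub_cocompact {G E : Type*} [AddGroup G]
    [TopologicalSpace G] [IsTopologicalAddGroup G] [T2Space G] [WeaklyLocallyCompactSpace G]
    [SigmaCompactSpace G] [MeasurableSpace G] [BorelSpace G] [NormedAddCommGroup E]
    [NormedSpace ℝ E] {μ : Measure G} {k : G → E} (hk : Integrable k μ) {K : Set G}
    (hK : IsCompact K) :
    Tendsto (fun t => ∫ u in (t - ·) ⁻¹' K, k u ∂μ) (cocompact G) (𝓝 0) := by
  have hmeas (t : G) : MeasurableSet ((t - ·) ⁻¹' K) :=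
    (continuous_sub_left t).measurable hK.measurableSet
  have hlim (u : G) :
      Tendsto (fun t => ((t - ·) ⁻¹' K).indicator k u) (cocompact G) (𝓝 0) := by
    refine tendsto_const_nhds.congr' ?_
    have hu := (Homeomorph.subRight u).isClosedEmbedding.tendsto_cocompact
    filter_upwards [hu.eventually hK.compl_mem_cocompact] with t ht
    exact (Set.indicator_of_notMem (s := (t - ·) ⁻¹' K) ht k).symm
  simp_rw [← integral_indicator (hmeas _)]
  rw [← integral_zero G E]
  exact tendsto_integral_filter_of_dominated_convergence (‖k ·‖)
    (.of_forall fun t => hk.aestronglyMeasurable.indicator (hmeas t))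
    (.of_forall fun t => .of_forall fun u => norm_indicator_le_norm_self k u) hk.norm
    (.of_forall hlim)

section Convolution

variable {𝕜 G X E F H : Type*} [NontriviallyNormedField 𝕜] [NormedAddCommGroup E]
  [NormedAddCommGroup F] [NormedAddCommGroup H] [NormedSpace 𝕜 E] [NormedSpace 𝕜 F]
  [NormedSpace 𝕜 H] [MeasurableSpace G] {μ : Measure G} {L : E →L[𝕜] F →L[𝕜] H} {k : G → E}

theorem convolutionExistsAt_of_continuous_of_norm_le [Sub G] [TopologicalSpace G]
    [ContinuousSub G] [OpensMeasurableSpace G] [SecondCountableTopologyEither G F]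
    (hk : Integrable k μ) {g : G → F} (hg : Continuous g) {C : ℝ} (hC : ∀ s, ‖g s‖ ≤ C) (t : G) :
    ConvolutionExistsAt k g t L μ :=
  L.integrable_of_bilin_of_bdd_right C hk
    (hg.comp (continuous_const.sub continuous_id)).aestronglyMeasurable
    (.of_forall fun u => hC (t - u))

variable [NormedSpace ℝ H]

theorem norm_convolution_le_add_setIntegral [Sub G] (hk : Integrable k μ) {g : G → F} {K : Set G}
    {C δ : ℝ} {t : G} (hK : MeasurableSet ((t - ·) ⁻¹' K)) (hδ₀ : 0 ≤ δ)
    (hC : ∀ s ∈ K, ‖g s‖ ≤ C) (hδ : ∀ s ∉ K, ‖g s‖ ≤ δ) :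
    ‖(k ⋆[L, μ] g) t‖ ≤
      ‖L‖ * ((∫ u, ‖k u‖ ∂μ) * δ + (∫ u in (t - ·) ⁻¹' K, ‖k u‖ ∂μ) * C) := by
  have hδint : Integrable (fun u => ‖k u‖ * δ) μ := hk.norm.mul_const δ
  have hCint : Integrable (((t - ·) ⁻¹' K).indicator fun u => ‖k u‖ * C) μ :=
    (hk.norm.mul_const C).indicator hK
  have hbound (u : G) :
      ‖k u‖ * ‖g (t - u)‖ ≤ ‖k u‖ * δ + ((t - ·) ⁻¹' K).indicator (fun u => ‖k u‖ * C) u := by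
    by_cases hu : t - u ∈ K
    · rw [Set.indicator_of_mem (Set.mem_preimage.2 hu)]
      exact (mul_le_mul_of_nonneg_left (hC _ hu) (norm_nonneg _)).trans
        (le_add_of_nonneg_left (by positivity))
    · rw [Set.indicator_of_notMem (mt Set.mem_preimage.1 hu), add_zero]
      exact mul_le_mul_of_nonneg_left (hδ _ hu) (norm_nonneg _)
  rw [← integral_mul_const, ← integral_mul_const, ← integral_indicator hK,
    ← integral_add hδint hCint, ← integral_const_mul, convolution_def]
  refine norm_integral_le_of_norm_le ((hδint.add hCint).const_mul _) (.of_forall fun u => ?_)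
  calc ‖L (k u) (g (t - u))‖ ≤ ‖L‖ * (‖k u‖ * ‖g (t - u)‖) :=
        (L.le_opNorm₂ _ _).trans_eq (mul_assoc _ _ _)
    _ ≤ _ := mul_le_mul_of_nonneg_left (hbound u) (norm_nonneg L)

theorem norm_convolution_le_of_norm_le [Sub G] (hk : Integrable k μ) {g : G → F} {C : ℝ}
    (hC : ∀ s, ‖g s‖ ≤ C) (t : G) :
    ‖(k ⋆[L, μ] g) t‖ ≤ (‖L‖ * ∫ u, ‖k u‖ ∂μ) * C := by
  have hC₀ : 0 ≤ C := (norm_nonneg _).trans (hC t)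
  simpa [mul_assoc] using norm_convolution_le_add_setIntegral (L := L) (K := ∅) (C := C) (t := t) hk
    MeasurableSet.empty hC₀ (by simp) fun s _ => hC s

theorem eventually_forall_mem_norm_convolution_lt [AddGroup G] [TopologicalSpace G]
    [IsTopologicalAddGroup G] [T2Space G] [WeaklyLocallyCompactSpace G] [SigmaCompactSpace G]
    [BorelSpace G] (hk : Integrable k μ) {g : G → X → F} {S : Set X} {C δ ε : ℝ}
    (hC : ∀ s, ∀ x ∈ S, ‖g s x‖ ≤ C) (hδ₀ : 0 ≤ δ)
    (hδ : ∀ᶠ s in cocompact G, ∀ x ∈ S, ‖g s x‖ ≤ δ)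
    (hε : (‖L‖ * ∫ u, ‖k u‖ ∂μ) * δ < ε) :
    ∀ᶠ t in cocompact G, ∀ x ∈ S, ‖(k ⋆[L, μ] fun s => g s x) t‖ < ε := by
  obtain ⟨K, hK, hKδ⟩ := mem_cocompact.1 hδ
  have hlim : Tendsto
      (fun t => ‖L‖ * ((∫ u, ‖k u‖ ∂μ) * δ + (∫ u in (t - ·) ⁻¹' K, ‖k u‖ ∂μ) * C))
      (cocompact G) (𝓝 ((‖L‖ * ∫ u, ‖k u‖ ∂μ) * δ)) := by
    simpa only [zero_mul, add_zero, mul_assoc] using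
      (((tendsto_setIntegral_preimage_const_sub_cocompact hk.norm hK).mul_const C).const_add
        ((∫ u, ‖k u‖ ∂μ) * δ)).const_mul ‖L‖
  filter_upwards [hlim.eventually_lt_const hε] with t ht x hx
  refine (norm_convolution_le_add_setIntegral hk ?_ hδ₀ (fun s _ => hC s x hx)
    fun s hs => hKδ hs x hx).trans_lt ht
  exact (continuous_sub_left t).measurable hK.measurableSet

theorem convolution_add_sub_convolution_add [AddCommGroup G] {g h : G → F} {a b t : G}
    (hg : ConvolutionExistsAt k g (t + a) L μ) (hh : ConvolutionExistsAt k h (t + b) L μ) :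
    (k ⋆[L, μ] g) (t + a) - (k ⋆[L, μ] h) (t + b) =
      (k ⋆[L, μ] fun s => g (s + a) - h (s + b)) t := by
  simp only [convolution_def, map_sub, sub_add_eq_add_sub]
  exact (integral_sub hg hh).symm

theorem uniformContinuousOn_convolution [SeminormedAddCommGroup G] [OpensMeasurableSpace G]
    [SecondCountableTopologyEither G F] [PseudoMetricSpace X] (hk : Integrable k μ)
    {f : G → X → F} {S : Set X} {C : ℝ} (hC : ∀ t, ∀ x ∈ S, ‖f t x‖ ≤ C)
    (hf : UniformContinuousOn (fun p : G × X => f p.1 p.2) (Set.univ ×ˢ S)) :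
    UniformContinuousOn (fun p : G × X => (k ⋆[L, μ] fun s => f s p.2) p.1) (Set.univ ×ˢ S) := by
  have hexists {x : X} (hx : x ∈ S) (t : G) : ConvolutionExistsAt k (fun s => f s x) t L μ :=
    convolutionExistsAt_of_continuous_of_norm_le hk
      (continuousOn_univ.1 (hf.continuousOn.uncurry_right x hx)) (hC · x hx) t
  refine Metric.uniformContinuousOn_iff.2 fun ε hε => ?_
  obtain ⟨δ, hδ₀, hδ⟩ := exists_pos_mul_lt hε (‖L‖ * ∫ u, ‖k u‖ ∂μ)
  obtain ⟨η, hη₀, hη⟩ := Metric.uniformContinuousOn_iff.1 hf δ hδ₀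
  refine ⟨η, hη₀, fun ⟨t, x⟩ ⟨_, hx⟩ ⟨s, y⟩ ⟨_, hy⟩ hdist => ?_⟩
  have hclose (u : G) : ‖f (u + t) x - f (u + s) y‖ ≤ δ := by
    rw [← dist_eq_norm]
    refine (hη (u + t, x) ⟨trivial, hx⟩ (u + s, y) ⟨trivial, hy⟩ ?_).le
    simpa only [Prod.dist_eq, dist_add_left] using hdist
  have hconv := convolution_add_sub_convolution_add (hexists hx (0 + t)) (hexists hy (0 + s))
  simp only [zero_add] at hconv
  rw [dist_eq_norm, hconv]
  exact (norm_convolution_le_of_norm_le hk hclose 0).trans_lt hδ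

theorem RAPUniform.convolution [NormedAddCommGroup X] {f : ℝ → X → F} {S : Set X} {μ : Measure ℝ}
    {k : ℝ → E} (hf : RAPUniform f S) (hk : Integrable k μ) (L : E →L[𝕜] F →L[𝕜] H) :
    RAPUniform (fun t x => (k ⋆[L, μ] fun s => f s x) t) S := by
  obtain ⟨⟨C, hC⟩, huc, hdense⟩ := rapUniform_iff_eventually.1 hf
  refine rapUniform_iff_eventually.2
    ⟨⟨_, fun t x hx => norm_convolution_le_of_norm_le hk (hC · x hx) t⟩,
      uniformContinuousOn_convolution hk hC huc, fun ε hε => ?_⟩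
  obtain ⟨δ, hδ₀, hδ⟩ := exists_pos_mul_lt hε (‖L‖ * ∫ u, ‖k u‖ ∂μ)
  refine (hdense δ hδ₀).mono fun τ hτ => ?_
  have hsmall : ∀ᶠ t in cocompact ℝ, ∀ x ∈ S,
      ‖(k ⋆[L, μ] fun s => f (s + τ) x - f s x) t‖ < ε :=
    eventually_forall_mem_norm_convolution_lt hk
      (fun s x hx => norm_sub_le_of_le (hC (s + τ) x hx) (hC s x hx)) hδ₀.le
      (hτ.mono fun s hs x hx => (hs x hx).le) hδ
  filter_upwards [hsmall] with t ht x hx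
  have hexists (s : ℝ) : ConvolutionExistsAt k (fun s => f s x) s L μ :=
    convolutionExistsAt_of_continuous_of_norm_le hk
      (continuousOn_univ.1 (huc.continuousOn.uncurry_right x hx)) (hC · x hx) s
  have hconv := convolution_add_sub_convolution_add (hexists (t + τ)) (hexists (t + 0))
  simp only [add_zero] at hconv
  exact (congrArg norm hconv).trans_lt (ht x hx)

end Convolution

theorem setIntegral_Iic_smul_eq_convolution {F : Type*} [NormedAddCommGroup F] [NormedSpace ℝ F]
    (k : ℝ → ℝ) (g : ℝ → F) (t : ℝ) :
    ∫ s in Set.Iic t, k (t - s) • g s =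
      ((Set.Ici 0).indicator k ⋆[ContinuousLinearMap.lsmul ℝ ℝ] g) t := by
  rw [convolution_lsmul_swap, ← integral_indicator measurableSet_Iic]
  congr 1 with s
  by_cases hs : s ≤ t <;> simp [hs]

theorem Fexp_RAPUniform_general {E F : Type*} [NormedAddCommGroup E] [NormedAddCommGroup F]
    [NormedSpace ℝ F] [CompleteSpace F] {f : ℝ → E → F} {S : Set E} (hf : RAPUniform f S) {ν : ℝ}
    (hν : 0 < ν) :
    RAPUniform (fun t x => ∫ s in Set.Iic t, Real.exp (-ν * (t - s)) • f s x) S := by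
  have hkernel : Integrable ((Set.Ici 0).indicator fun u => Real.exp (-ν * u)) :=
    (integrable_indicator_iff measurableSet_Ici).2 <|
      (integrableOn_Ici_iff_integrableOn_Ioi).2 <| integrableOn_exp_mul_Ioi (neg_lt_zero.2 hν) 0
  simpa only [setIntegral_Iic_smul_eq_convolution fun u => Real.exp (-ν * u)] using
    hf.convolution hkernel (ContinuousLinearMap.lsmul ℝ ℝ)

/-- Lemma 3.3(4): if `f` is RAP in `t` uniformly w.r.t. `x`
in the compact set `Ω`, then so is `F(·,·,ν)` for each `ν > 0`. -/
theorem Fexp_RAPUniform {n : ℕ} (Ω : Set (EuclideanSpace ℝ (Fin n)))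
    (hΩ : IsCompact Ω)
    (f : ℝ → EuclideanSpace ℝ (Fin n) → ℝ)
    (hf : RAPUniform f Ω)
    (ν : ℝ) (hν : 0 < ν) :
    RAPUniform (fun t x => Fexp f x ν t) Ω :=
  Fexp_RAPUniform_general hf hν
end

section
/- Let f : ℝ × ℝⁿ → ℝⁿ be twice continuously differentiable in x, let ξ : ℝ → ℝⁿ be continuous, and let r > 0, N₁ ≥ 0, N₂ ≥ 0. Suppose that for all t ∈ ℝ, all z, z' with ‖z − ξ(t)‖ ≤ r and ‖z' − ξ(t)‖ ≤ r, and all i,j ∈ {1,…,n}: ‖(∂²f/∂x_i∂x_j)(t,z)‖ ≤ N₁ and ‖(∂²f/∂x_i∂x_j)(t,z) − (∂²f/∂x_i∂x_j)(t,z')‖ ≤ N₂‖z − z'‖. Define f₂(t,y) := f(t, ξ(t)+y) − f(t, ξ(t)) − (∂f/∂x)(t,ξ(t))·y. Then ‖f₂(t,y) − f₂(t,ŷ)‖ ≤ (n·r·N₁ + r²·N₂)·‖y − ŷ‖ for every t ∈ ℝ and all y, ŷ with ‖y‖, ‖ŷ‖ ≤ r. -/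
open MeasureTheory Filter

/-!
The remainder `y ↦ f (a + y) - f a - f'(a) y` has derivative `f'(a + y) - f'(a)`. By the mean value
inequality this derivative is at most `r * sup ‖f''‖` on the ball of radius `r`, and by the mean
value inequality again the same number is a Lipschitz constant of the remainder. Finally, the norm
of the bilinear map `f''` is at most its Hilbert–Schmidt norm, hence at most `n` times a common
bound of its `n ^ 2` entries.
-/

section HilbertSchmidt

variable {𝕜 ι κ E G F : Type*} [RCLike 𝕜] [Fintype ι] [Fintype κ]
  [NormedAddCommGroup E] [InnerProductSpace 𝕜 E] [NormedAddCommGroup G] [InnerProductSpace 𝕜 G]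
  [NormedAddCommGroup F] [NormedSpace 𝕜 F]

theorem sq_opNorm_le_sum_sq_norm_apply (b : OrthonormalBasis ι 𝕜 E) (A : E →L[𝕜] F) :
    ‖A‖ ^ 2 ≤ ∑ i, ‖A (b i)‖ ^ 2 := by
  refine (Real.le_sqrt (norm_nonneg A) (by positivity)).mp ?_
  refine A.opNorm_le_bound (Real.sqrt_nonneg _) fun x => ?_
  calc ‖A x‖ = ‖∑ i, inner 𝕜 (b i) x • A (b i)‖ := by
        rw [← congrArg A (b.sum_repr' x), map_sum]
        simp only [map_smul]
    _ ≤ ∑ i, ‖A (b i)‖ * ‖inner 𝕜 (b i) x‖ :=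
        norm_sum_le_of_le _ fun i _ => by rw [norm_smul, mul_comm]
    _ ≤ √(∑ i, ‖A (b i)‖ ^ 2) * √(∑ i, ‖inner 𝕜 (b i) x‖ ^ 2) :=
        Real.sum_mul_le_sqrt_mul_sqrt _ _ _
    _ = √(∑ i, ‖A (b i)‖ ^ 2) * ‖x‖ := by
        rw [b.sum_sq_norm_inner_right, Real.sqrt_sq (norm_nonneg x)]

theorem sq_opNorm_le_sum_sq_norm_apply₂ (b : OrthonormalBasis ι 𝕜 E)
    (c : OrthonormalBasis κ 𝕜 G) (B : E →L[𝕜] G →L[𝕜] F) :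
    ‖B‖ ^ 2 ≤ ∑ i, ∑ j, ‖B (b i) (c j)‖ ^ 2 :=
  (sq_opNorm_le_sum_sq_norm_apply b B).trans <|
    Finset.sum_le_sum fun i _ => sq_opNorm_le_sum_sq_norm_apply c (B (b i))

theorem opNorm_le_card_mul_of_norm_apply₂_le (b : OrthonormalBasis ι 𝕜 E)
    (B : E →L[𝕜] E →L[𝕜] F) {N : ℝ} (hB : ∀ i j, ‖B (b i) (b j)‖ ≤ N) :
    ‖B‖ ≤ Fintype.card ι * N := by
  have card_mul_nonneg : 0 ≤ Fintype.card ι * N := by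
    rcases isEmpty_or_nonempty ι with _ | ⟨⟨i⟩⟩
    · simp
    · exact mul_nonneg (Nat.cast_nonneg _) ((norm_nonneg _).trans (hB i i))
  refine le_of_sq_le_sq ?_ card_mul_nonneg
  calc ‖B‖ ^ 2 ≤ ∑ i, ∑ j, ‖B (b i) (b j)‖ ^ 2 := sq_opNorm_le_sum_sq_norm_apply₂ b b B
    _ ≤ ∑ _i : ι, ∑ _j : ι, N ^ 2 := by gcongr; exact hB _ _
    _ = (Fintype.card ι * N) ^ 2 := by
        simp only [Finset.sum_const, Finset.card_univ, nsmul_eq_mul]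
        ring

end HilbertSchmidt

section TaylorRemainder

variable {𝕜 E F : Type*} [RCLike 𝕜] [NormedAddCommGroup E] [NormedSpace 𝕜 E]
  [NormedAddCommGroup F] [NormedSpace 𝕜 F] {f : E → F} {a y y' : E} {r C : ℝ}

variable (𝕜) in
/-- The remainder of the first-order Taylor expansion of `f` at `a`, as a function of the increment
`y`; for `f = f(t, ·)` and `a = ξ(t)` this is `f₂(t, y)`. -/
noncomputable def taylorRemainder (f : E → F) (a y : E) : F :=
  f (a + y) - f a - fderiv 𝕜 f a y

theorem hasFDerivAt_taylorRemainder (hf : DifferentiableAt 𝕜 f (a + y)) :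
    HasFDerivAt (taylorRemainder 𝕜 f a) (fderiv 𝕜 f (a + y) - fderiv 𝕜 f a) y :=
  (((hasFDerivAt_comp_add_left a).mpr hf.hasFDerivAt).sub_const (f a)).sub
    (fderiv 𝕜 f a).hasFDerivAt

theorem norm_fderiv_sub_le_of_norm_fderiv_fderiv_le {z : E}
    (hf' : ∀ x ∈ Metric.closedBall a r, DifferentiableAt 𝕜 (fderiv 𝕜 f) x)
    (hC : ∀ x ∈ Metric.closedBall a r, ‖fderiv 𝕜 (fderiv 𝕜 f) x‖ ≤ C)
    (hz : z ∈ Metric.closedBall a r) :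
    ‖fderiv 𝕜 f z - fderiv 𝕜 f a‖ ≤ C * r := by
  let _ : NormedSpace ℝ E := .restrictScalars ℝ 𝕜 E
  have ha : a ∈ Metric.closedBall a r := Metric.mem_closedBall_self (dist_nonneg.trans hz)
  have hC₀ : 0 ≤ C := (norm_nonneg (fderiv 𝕜 (fderiv 𝕜 f) a)).trans (hC a ha)
  calc ‖fderiv 𝕜 f z - fderiv 𝕜 f a‖ ≤ C * ‖z - a‖ :=
        (convex_closedBall a r).norm_image_sub_le_of_norm_fderiv_le hf' hC ha hz
    _ ≤ C * r := by gcongr; exact mem_closedBall_iff_norm.mp hz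

theorem norm_taylorRemainder_sub_le_of_norm_fderiv_fderiv_le
    (hf : ∀ x ∈ Metric.closedBall a r, DifferentiableAt 𝕜 f x)
    (hf' : ∀ x ∈ Metric.closedBall a r, DifferentiableAt 𝕜 (fderiv 𝕜 f) x)
    (hC : ∀ x ∈ Metric.closedBall a r, ‖fderiv 𝕜 (fderiv 𝕜 f) x‖ ≤ C)
    (hy : ‖y‖ ≤ r) (hy' : ‖y'‖ ≤ r) :
    ‖taylorRemainder 𝕜 f a y - taylorRemainder 𝕜 f a y'‖ ≤ C * r * ‖y - y'‖ := by
  let _ : NormedSpace ℝ E := .restrictScalars ℝ 𝕜 E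
  have add_mem : ∀ x ∈ Metric.closedBall (0 : E) r, a + x ∈ Metric.closedBall a r := by
    simp
  exact (convex_closedBall (0 : E) r).norm_image_sub_le_of_norm_hasFDerivWithin_le
    (fun x hx => (hasFDerivAt_taylorRemainder (hf _ (add_mem x hx))).hasFDerivWithinAt)
    (fun x hx => norm_fderiv_sub_le_of_norm_fderiv_fderiv_le hf' hC (add_mem x hx))
    (mem_closedBall_zero_iff.mpr hy') (mem_closedBall_zero_iff.mpr hy)

end TaylorRemainder

theorem taylor_remainder_lipschitz_general {𝕜 ι E F : Type*} [RCLike 𝕜] [Fintype ι]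
    [NormedAddCommGroup E] [InnerProductSpace 𝕜 E] [NormedAddCommGroup F] [NormedSpace 𝕜 F]
    (b : OrthonormalBasis ι 𝕜 E) {f : E → F} {a : E} {r N : ℝ}
    (hf : ∀ z, ‖z - a‖ ≤ r → DifferentiableAt 𝕜 f z)
    (hf' : ∀ z, ‖z - a‖ ≤ r → DifferentiableAt 𝕜 (fderiv 𝕜 f) z)
    (hN : ∀ z, ‖z - a‖ ≤ r → ∀ i j, ‖iteratedFDeriv 𝕜 2 f z ![b i, b j]‖ ≤ N)
    {y y' : E} (hy : ‖y‖ ≤ r) (hy' : ‖y'‖ ≤ r) :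
    ‖taylorRemainder 𝕜 f a y - taylorRemainder 𝕜 f a y'‖ ≤
      Fintype.card ι * r * N * ‖y - y'‖ := by
  simp only [← mem_closedBall_iff_norm] at hf hf' hN
  have hC : ∀ z ∈ Metric.closedBall a r, ‖fderiv 𝕜 (fderiv 𝕜 f) z‖ ≤ Fintype.card ι * N :=
    fun z hz => opNorm_le_card_mul_of_norm_apply₂_le b _ fun i j => by
      simpa [iteratedFDeriv_two_apply] using hN z hz i j
  rw [mul_right_comm (Fintype.card ι : ℝ)]
  exact norm_taylorRemainder_sub_le_of_norm_fderiv_fderiv_le hf hf' hC hy hy'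

/-- Lipschitz estimate (2.8) for the second-order Taylor
remainder `f₂(t,y) = f(t,ξ(t)+y) − f(t,ξ(t)) − (∂f/∂x)(t,ξ(t))·y`. -/
theorem taylor_remainder_lipschitz {n : ℕ}
    (f : ℝ → EuclideanSpace ℝ (Fin n) → EuclideanSpace ℝ (Fin n))
    (ξ : ℝ → EuclideanSpace ℝ (Fin n))
    (hfC2 : ∀ t, ContDiff ℝ 2 (f t)) (hξ : Continuous ξ)
    (r N₁ N₂ : ℝ) (hr : 0 < r) (hN₁ : 0 ≤ N₁) (hN₂ : 0 ≤ N₂)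
    (hbound : ∀ t : ℝ, ∀ z : EuclideanSpace ℝ (Fin n), ‖z - ξ t‖ ≤ r →
      ∀ i j : Fin n,
        ‖iteratedFDeriv ℝ 2 (f t) z
          ![EuclideanSpace.single i (1:ℝ), EuclideanSpace.single j (1:ℝ)]‖ ≤ N₁)
    (hlip : ∀ t : ℝ, ∀ z z' : EuclideanSpace ℝ (Fin n),
      ‖z - ξ t‖ ≤ r → ‖z' - ξ t‖ ≤ r → ∀ i j : Fin n,
        ‖iteratedFDeriv ℝ 2 (f t) z
            ![EuclideanSpace.single i (1:ℝ), EuclideanSpace.single j (1:ℝ)] -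
          iteratedFDeriv ℝ 2 (f t) z'
            ![EuclideanSpace.single i (1:ℝ), EuclideanSpace.single j (1:ℝ)]‖ ≤
          N₂ * ‖z - z'‖) :
    ∀ t : ℝ, ∀ y yh : EuclideanSpace ℝ (Fin n), ‖y‖ ≤ r → ‖yh‖ ≤ r →
      ‖(f t (ξ t + y) - f t (ξ t) - fderiv ℝ (f t) (ξ t) y) -
        (f t (ξ t + yh) - f t (ξ t) - fderiv ℝ (f t) (ξ t) yh)‖ ≤
      (n * r * N₁ + r ^ 2 * N₂) * ‖y - yh‖ := by
  intro t y yh hy hyh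
  have h := taylor_remainder_lipschitz_general (EuclideanSpace.basisFun (Fin n) ℝ)
    (fun z _ => (hfC2 t).differentiable two_ne_zero z)
    (fun z _ => ((hfC2 t).fderiv_right one_add_one_eq_two.le).differentiable one_ne_zero z)
    (by simpa using hbound t) hy hyh
  rw [Fintype.card_fin] at h
  exact h.trans (by gcongr; exact le_add_of_nonneg_right (by positivity))
end
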